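/- The space of torsion tensors on ℝ⁴ of anti-Z type, i.e. satisfying Z_{ijk} = 0 for every direct ordering (i,j,k,l), equals the internal direct sum C₋ ⊕ 𝒜₊. -/

import Mathlib

/-!
Everything is read off in the standard basis. For a torsion tensor selfdual in its first two
arguments, `T_{jkl} = T_{ill}` for every direct ordering `(i,j,k,l)`, so `Z_{ijk}` is the
`i`-th component of the trace `c(T)`; hence `𝒜₊` is of anti-`Z` type (`Aplus_le_AntiZ`). A member
of `C₋` has `T_{ijj} = T_{ikk} = νᵢ` and `T_{jkl} = -2νᵢ`, so it is also of anti-`Z` type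
(`Cminus_le_AntiZ`), and its trace is `3ν` (`trace_of_Cminus`).

Conversely, subtracting from an anti-`Z` tensor the member of `C₋` with `ν = c(T)/3` leaves a
trace-free anti-`Z` tensor. For such a tensor, `Z_{ijk} = 0` says exactly `T_{jkl} = T_{ill}`,
which is selfduality (`selfdual_expand`). The Bianchi sum of a selfdual tensor is the trace
contracted into the volume form, so it vanishes too, and the remainder lies in `𝒜₊`
(`mem_Aplus_of_traceFree`). The sum is direct because a member of `C₋` with zero trace has `ν = 0`.
-/

noncomputable section

set_option maxSynthPendingDepth 3

/-- Euclidean `n`-space `ℝⁿ`. -/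
abbrev V (n : ℕ) := Fin n → ℝ

/-- Trilinear forms on `ℝⁿ`. -/
abbrev Tri (n : ℕ) := V n →ₗ[ℝ] V n →ₗ[ℝ] V n →ₗ[ℝ] ℝ

/-- The standard inner product on `ℝⁿ`. -/
def inn {n : ℕ} (X Y : V n) : ℝ := ∑ i, X i * Y i

/-- The standard orthonormal basis of `ℝⁿ`. -/
def stdB {n : ℕ} (i : Fin n) : V n := Pi.single i 1

/-- Torsion tensors: trilinear forms antisymmetric in the first two arguments. -/
def Torsion (n : ℕ) : Submodule ℝ (Tri n) where
  carrier := {T | ∀ X Y Z, T X Y Z = - T Y X Z}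
  zero_mem' := by intro X Y Z; simp
  add_mem' := by
    intro T S hT hS X Y Z
    simp only [LinearMap.add_apply]
    linear_combination hT X Y Z + hS X Y Z
  smul_mem' := by
    intro c T hT X Y Z
    simp only [LinearMap.smul_apply, smul_eq_mul]
    linear_combination c * hT X Y Z

/-- The kernel of the Bianchi map `𝔟(T)(X,Y,Z) = T(X,Y,Z) + T(Y,Z,X) + T(Z,X,Y)`. -/
def kerBianchi (n : ℕ) : Submodule ℝ (Tri n) where
  carrier := {T | ∀ X Y Z, T X Y Z + T Y Z X + T Z X Y = 0}
  zero_mem' := by intro X Y Z; simp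
  add_mem' := by
    intro T S hT hS X Y Z
    simp only [LinearMap.add_apply]
    linear_combination hT X Y Z + hS X Y Z
  smul_mem' := by
    intro c T hT X Y Z
    simp only [LinearMap.smul_apply, smul_eq_mul]
    linear_combination c * hT X Y Z

/-- The kernel of the trace map `c(T)(X) = Σⱼ T(X,eⱼ,eⱼ)`. -/
def kerTrace (n : ℕ) : Submodule ℝ (Tri n) where
  carrier := {T | ∀ X, ∑ j, T X (stdB j) (stdB j) = 0}
  zero_mem' := by intro X; simp
  add_mem' := by
    intro T S hT hS X
    simp only [LinearMap.add_apply, Finset.sum_add_distrib]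
    rw [hT X, hS X]; ring
  smul_mem' := by
    intro c T hT X
    simp only [LinearMap.smul_apply, smul_eq_mul, ← Finset.mul_sum]
    rw [hT X, mul_zero]
/-- The Cartan component `𝒜 = ker 𝔟 ∩ ker c` (inside the torsion tensors). -/
def CartanA (n : ℕ) : Submodule ℝ (Tri n) := Torsion n ⊓ kerBianchi n ⊓ kerTrace n

/-! ### Selfdual and anti-selfdual 2-forms on `ℝ⁴` -/

/-- The selfdual 2-form `e⁰∧e¹ + e²∧e³`. -/
def sd₁ (X Y : V 4) : ℝ := (X 0 * Y 1 - X 1 * Y 0) + (X 2 * Y 3 - X 3 * Y 2)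

/-- The selfdual 2-form `e⁰∧e² + e³∧e¹`. -/
def sd₂ (X Y : V 4) : ℝ := (X 0 * Y 2 - X 2 * Y 0) + (X 3 * Y 1 - X 1 * Y 3)

/-- The selfdual 2-form `e⁰∧e³ + e¹∧e²`. -/
def sd₃ (X Y : V 4) : ℝ := (X 0 * Y 3 - X 3 * Y 0) + (X 1 * Y 2 - X 2 * Y 1)

/-- The anti-selfdual 2-form `e⁰∧e¹ − e²∧e³`. -/
def asd₁ (X Y : V 4) : ℝ := (X 0 * Y 1 - X 1 * Y 0) - (X 2 * Y 3 - X 3 * Y 2)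

/-- The anti-selfdual 2-form `e⁰∧e² − e³∧e¹`. -/
def asd₂ (X Y : V 4) : ℝ := (X 0 * Y 2 - X 2 * Y 0) - (X 3 * Y 1 - X 1 * Y 3)

/-- The anti-selfdual 2-form `e⁰∧e³ − e¹∧e²`. -/
def asd₃ (X Y : V 4) : ℝ := (X 0 * Y 3 - X 3 * Y 0) - (X 1 * Y 2 - X 2 * Y 1)

/-- `𝒜₊`: members of `𝒜` such that for every `Z` the 2-form `(X,Y) ↦ T(X,Y,Z)` is
a combination of the selfdual forms. -/
def Aplus : Submodule ℝ (Tri 4) where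
  carrier := {T | T ∈ CartanA 4 ∧ ∀ Z, ∃ a b c : ℝ, ∀ X Y,
      T X Y Z = a * sd₁ X Y + b * sd₂ X Y + c * sd₃ X Y}
  zero_mem' := ⟨(CartanA 4).zero_mem, fun Z => ⟨0, 0, 0, by intro X Y; simp⟩⟩
  add_mem' := by
    rintro T S ⟨hT, hT'⟩ ⟨hS, hS'⟩
    refine ⟨(CartanA 4).add_mem hT hS, fun Z => ?_⟩
    obtain ⟨a, b, c, h⟩ := hT' Z
    obtain ⟨a', b', c', h'⟩ := hS' Z
    refine ⟨a + a', b + b', c + c', fun X Y => ?_⟩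
    simp only [LinearMap.add_apply]
    linear_combination h X Y + h' X Y
  smul_mem' := by
    rintro r T ⟨hT, hT'⟩
    refine ⟨(CartanA 4).smul_mem r hT, fun Z => ?_⟩
    obtain ⟨a, b, c, h⟩ := hT' Z
    refine ⟨r * a, r * b, r * c, fun X Y => ?_⟩
    simp only [LinearMap.smul_apply, smul_eq_mul]
    linear_combination r * h X Y

/-- `𝒜₋`: members of `𝒜` such that for every `Z` the 2-form `(X,Y) ↦ T(X,Y,Z)` is
a combination of the anti-selfdual forms. -/
def Aminus : Submodule ℝ (Tri 4) where
  carrier := {T | T ∈ CartanA 4 ∧ ∀ Z, ∃ a b c : ℝ, ∀ X Y,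
      T X Y Z = a * asd₁ X Y + b * asd₂ X Y + c * asd₃ X Y}
  zero_mem' := ⟨(CartanA 4).zero_mem, fun Z => ⟨0, 0, 0, by intro X Y; simp⟩⟩
  add_mem' := by
    rintro T S ⟨hT, hT'⟩ ⟨hS, hS'⟩
    refine ⟨(CartanA 4).add_mem hT hS, fun Z => ?_⟩
    obtain ⟨a, b, c, h⟩ := hT' Z
    obtain ⟨a', b', c', h'⟩ := hS' Z
    refine ⟨a + a', b + b', c + c', fun X Y => ?_⟩
    simp only [LinearMap.add_apply]
    linear_combination h X Y + h' X Y
  smul_mem' := by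
    rintro r T ⟨hT, hT'⟩
    refine ⟨(CartanA 4).smul_mem r hT, fun Z => ?_⟩
    obtain ⟨a, b, c, h⟩ := hT' Z
    refine ⟨r * a, r * b, r * c, fun X Y => ?_⟩
    simp only [LinearMap.smul_apply, smul_eq_mul]
    linear_combination r * h X Y

/-- `(i,j,k,l)` is a direct ordering when it is an even permutation of `(0,1,2,3)`. -/
def DirectOrdering (i j k l : Fin 4) : Prop :=
  ∃ σ : Equiv.Perm (Fin 4), Equiv.Perm.sign σ = 1 ∧ σ 0 = i ∧ σ 1 = j ∧ σ 2 = k ∧ σ 3 = l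

instance (i j k l : Fin 4) : Decidable (DirectOrdering i j k l) :=
  inferInstanceAs (Decidable (∃ σ : Equiv.Perm (Fin 4),
    Equiv.Perm.sign σ = 1 ∧ σ 0 = i ∧ σ 1 = j ∧ σ 2 = k ∧ σ 3 = l))

/-- `Z_{ijk} = T_{ijj} + T_{ikk} + T_{jkl}` for a direct ordering `(i,j,k,l)`. -/
def Zc (T : Tri 4) (i j k l : Fin 4) : ℝ :=
  T (stdB i) (stdB j) (stdB j) + T (stdB i) (stdB k) (stdB k) + T (stdB j) (stdB k) (stdB l)

/-- The space of torsion tensors of anti-`Z` type: `Z_{ijk} = 0` for every direct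
ordering `(i,j,k,l)`. -/
def AntiZ : Submodule ℝ (Tri 4) where
  carrier := {T | T ∈ Torsion 4 ∧ ∀ i j k l, DirectOrdering i j k l → Zc T i j k l = 0}
  zero_mem' := ⟨(Torsion 4).zero_mem, by intro i j k l _; simp [Zc]⟩
  add_mem' := by
    rintro T S ⟨hT, hT'⟩ ⟨hS, hS'⟩
    refine ⟨(Torsion 4).add_mem hT hS, fun i j k l h => ?_⟩
    have h1 := hT' i j k l h
    have h2 := hS' i j k l h
    simp only [Zc, LinearMap.add_apply] at h1 h2 ⊢
    linear_combination h1 + h2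
  smul_mem' := by
    rintro c T ⟨hT, hT'⟩
    refine ⟨(Torsion 4).smul_mem c hT, fun i j k l h => ?_⟩
    have h1 := hT' i j k l h
    simp only [Zc, LinearMap.smul_apply, smul_eq_mul] at h1 ⊢
    linear_combination c * h1

/-- The volume form of `ℝ⁴`: the determinant with respect to the standard basis. -/
def vol4 (a b c d : V 4) : ℝ := Matrix.det (Matrix.of ![a, b, c, d])

/-- The vector dual to a linear functional `ν` under the standard inner product. -/
def sharp (ν : V 4 →ₗ[ℝ] ℝ) : V 4 := fun i => ν (stdB i)

lemma sharp_add (ν ρ : V 4 →ₗ[ℝ] ℝ) : sharp (ν + ρ) = sharp ν + sharp ρ := by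
  funext i; simp [sharp]

lemma sharp_smul (c : ℝ) (ν : V 4 →ₗ[ℝ] ℝ) : sharp (c • ν) = c • sharp ν := by
  funext i; simp [sharp]

lemma vol4_add_left (a b x y z : V 4) :
    vol4 (a + b) x y z = vol4 a x y z + vol4 b x y z := by
  simp [vol4, Matrix.det_succ_row_zero, Fin.sum_univ_succ, Pi.add_apply]
  ring

lemma vol4_smul_left (c : ℝ) (a x y z : V 4) :
    vol4 (c • a) x y z = c * vol4 a x y z := by
  simp [vol4, Matrix.det_succ_row_zero, Fin.sum_univ_succ, Pi.smul_apply, smul_eq_mul]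
  ring

lemma vol4_zero_left (x y z : V 4) : vol4 0 x y z = 0 := by
  simp [vol4, Matrix.det_succ_row_zero, Fin.sum_univ_succ]

/-- `C₋`: tensors `T(X,Y,Z) = ν(X)⟨Y,Z⟩ − ν(Y)⟨X,Z⟩ − 2 vol(ν♯,X,Y,Z)`. -/
def Cminus : Submodule ℝ (Tri 4) where
  carrier := {T | ∃ ν : V 4 →ₗ[ℝ] ℝ, ∀ X Y Z,
      T X Y Z = ν X * inn Y Z - ν Y * inn X Z - 2 * vol4 (sharp ν) X Y Z}
  zero_mem' := ⟨0, by
    intro X Y Z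
    have h : sharp (0 : V 4 →ₗ[ℝ] ℝ) = 0 := by funext i; simp [sharp]
    simp [h, vol4_zero_left]⟩
  add_mem' := by
    rintro T S ⟨ν, hν⟩ ⟨ρ, hρ⟩
    refine ⟨ν + ρ, fun X Y Z => ?_⟩
    simp only [LinearMap.add_apply, sharp_add, vol4_add_left]
    linear_combination hν X Y Z + hρ X Y Z
  smul_mem' := by
    rintro c T ⟨ν, hν⟩
    refine ⟨c • ν, fun X Y Z => ?_⟩
    simp only [LinearMap.smul_apply, smul_eq_mul, sharp_smul, vol4_smul_left]
    linear_combination c * hν X Y Z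

lemma directOrdering_iff (i j k l : Fin 4) : DirectOrdering i j k l ↔
    (i, j, k, l) ∈ ([(0,1,2,3), (0,2,3,1), (0,3,1,2), (1,0,3,2), (1,3,2,0), (1,2,0,3),
      (2,0,1,3), (2,1,3,0), (2,3,0,1), (3,0,2,1), (3,2,1,0), (3,1,0,2)] :
      List (Fin 4 × Fin 4 × Fin 4 × Fin 4)) := by
  revert i j k l
  decide +kernel

lemma eq_sum_stdB (X : V 4) :
    X = X 0 • stdB 0 + X 1 • stdB 1 + X 2 • stdB 2 + X 3 • stdB 3 := by
  funext i
  fin_cases i <;> simp [stdB]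

lemma stdB_apply (i j : Fin 4) : (stdB i : V 4) j = if j = i then 1 else 0 := by
  simp [stdB, Pi.single_apply]

/-- Cofactor expansion of the volume form along its first argument. -/
lemma vol4_eq (a X Y Z : V 4) : vol4 a X Y Z =
    a 0 * (X 1 * (Y 2 * Z 3 - Y 3 * Z 2) - X 2 * (Y 1 * Z 3 - Y 3 * Z 1)
      + X 3 * (Y 1 * Z 2 - Y 2 * Z 1))
    - a 1 * (X 0 * (Y 2 * Z 3 - Y 3 * Z 2) - X 2 * (Y 0 * Z 3 - Y 3 * Z 0)
      + X 3 * (Y 0 * Z 2 - Y 2 * Z 0))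
    + a 2 * (X 0 * (Y 1 * Z 3 - Y 3 * Z 1) - X 1 * (Y 0 * Z 3 - Y 3 * Z 0)
      + X 3 * (Y 0 * Z 1 - Y 1 * Z 0))
    - a 3 * (X 0 * (Y 1 * Z 2 - Y 2 * Z 1) - X 1 * (Y 0 * Z 2 - Y 2 * Z 0)
      + X 2 * (Y 0 * Z 1 - Y 1 * Z 0)) := by
  simp [vol4, Matrix.det_succ_row_zero, Fin.sum_univ_succ, Fin.succAbove]
  ring

/-- A sum over `Fin 4` taken in the order of a direct ordering. -/
lemma sum_of_directOrdering {i j k l : Fin 4} (h : DirectOrdering i j k l) (f : Fin 4 → ℝ) :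
    ∑ m, f m = f i + f j + f k + f l := by
  obtain ⟨σ, -, rfl, rfl, rfl, rfl⟩ := h
  rw [← Equiv.sum_comp σ f, Fin.sum_univ_four]

lemma functional_eq (ν : V 4 →ₗ[ℝ] ℝ) (X : V 4) :
    ν X = X 0 * sharp ν 0 + X 1 * sharp ν 1 + X 2 * sharp ν 2 + X 3 * sharp ν 3 := by
  conv_lhs => rw [eq_sum_stdB X]
  simp [sharp]

/-- The element of `C₋` determined by the functional `ν`, as a trilinear form. -/
def cminusOf (ν : V 4 →ₗ[ℝ] ℝ) : Tri 4 :=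
  LinearMap.mk₂ ℝ
    (fun X Y =>
      { toFun := fun Z => ν X * inn Y Z - ν Y * inn X Z - 2 * vol4 (sharp ν) X Y Z
        map_add' := by
          intro Z W
          simp only [inn, vol4_eq, Fin.sum_univ_four, Pi.add_apply]
          ring
        map_smul' := by
          intro r Z
          simp only [inn, vol4_eq, Fin.sum_univ_four, Pi.smul_apply, smul_eq_mul,
            RingHom.id_apply]
          ring })
    (by
      intro X X' Y
      refine LinearMap.ext fun Z => ?_
      simp only [inn, vol4_eq, Fin.sum_univ_four, map_add, LinearMap.coe_mk, AddHom.coe_mk,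
        LinearMap.add_apply, Pi.add_apply]
      ring)
    (by
      intro r X Y
      refine LinearMap.ext fun Z => ?_
      simp only [inn, vol4_eq, Fin.sum_univ_four, map_smul, LinearMap.coe_mk, AddHom.coe_mk,
        LinearMap.smul_apply, Pi.smul_apply, smul_eq_mul]
      ring)
    (by
      intro X Y Y'
      refine LinearMap.ext fun Z => ?_
      simp only [inn, vol4_eq, Fin.sum_univ_four, map_add, LinearMap.coe_mk, AddHom.coe_mk,
        LinearMap.add_apply, Pi.add_apply]
      ring)
    (by
      intro r X Y
      refine LinearMap.ext fun Z => ?_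
      simp only [inn, vol4_eq, Fin.sum_univ_four, map_smul, LinearMap.coe_mk, AddHom.coe_mk,
        LinearMap.smul_apply, Pi.smul_apply, smul_eq_mul]
      ring)

lemma cminusOf_mem (ν : V 4 →ₗ[ℝ] ℝ) : cminusOf ν ∈ Cminus :=
  ⟨ν, fun _ _ _ => rfl⟩

/-- In a direct ordering `(i,j,k,l)`, a member of `C₋` has `T_{ijj} = T_{ikk} = νᵢ` and
`T_{jkl} = -2νᵢ`. -/
lemma Cminus_le_AntiZ : Cminus ≤ AntiZ := by
  rintro T ⟨ν, hν⟩
  refine ⟨fun X Y Z => ?_, fun i j k l h => ?_⟩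
  · simp only [hν, vol4_eq]
    ring
  · rw [directOrdering_iff] at h
    simp only [List.mem_cons, Prod.mk.injEq, List.not_mem_nil, or_false] at h
    simp only [Zc, hν, vol4_eq, functional_eq ν, inn, Fin.sum_univ_four]
    rcases h with ⟨rfl, rfl, rfl, rfl⟩ | ⟨rfl, rfl, rfl, rfl⟩ | ⟨rfl, rfl, rfl, rfl⟩ |
      ⟨rfl, rfl, rfl, rfl⟩ | ⟨rfl, rfl, rfl, rfl⟩ | ⟨rfl, rfl, rfl, rfl⟩ |
      ⟨rfl, rfl, rfl, rfl⟩ | ⟨rfl, rfl, rfl, rfl⟩ | ⟨rfl, rfl, rfl, rfl⟩ |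
      ⟨rfl, rfl, rfl, rfl⟩ | ⟨rfl, rfl, rfl, rfl⟩ | ⟨rfl, rfl, rfl, rfl⟩ <;>
    simp [stdB_apply] <;> ring

/-- The trace recovers the functional defining a member of `C₋`. -/
lemma trace_of_Cminus {T : Tri 4} {ν : V 4 →ₗ[ℝ] ℝ}
    (hν : ∀ X Y Z, T X Y Z = ν X * inn Y Z - ν Y * inn X Z - 2 * vol4 (sharp ν) X Y Z)
    (X : V 4) : ∑ j, T X (stdB j) (stdB j) = 3 * ν X := by
  simp only [hν, vol4_eq, functional_eq ν, inn, Fin.sum_univ_four]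
  simp [stdB_apply]
  ring

/-- Selfduality turns the term `T_{jkl}` into `T_{ill}`, so `Z_{ijk}` is the `i`-th
component of the trace. -/
lemma Aplus_le_AntiZ : Aplus ≤ AntiZ := by
  rintro T ⟨⟨⟨hT, -⟩, htr⟩, hsd⟩
  refine ⟨hT, fun i j k l h => ?_⟩
  have htri := htr (stdB i)
  obtain ⟨a, b, c, hl⟩ := hsd (stdB l)
  have hjkl := hl (stdB j) (stdB k)
  have hill := hl (stdB i) (stdB l)
  have hii := hT (stdB i) (stdB i) (stdB i)
  rw [sum_of_directOrdering h] at htri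
  rw [directOrdering_iff] at h
  simp only [List.mem_cons, Prod.mk.injEq, List.not_mem_nil, or_false] at h
  simp only [Zc]
  have key : T (stdB j) (stdB k) (stdB l) = T (stdB i) (stdB l) (stdB l) := by
    rw [hjkl, hill]
    rcases h with ⟨rfl, rfl, rfl, rfl⟩ | ⟨rfl, rfl, rfl, rfl⟩ | ⟨rfl, rfl, rfl, rfl⟩ |
      ⟨rfl, rfl, rfl, rfl⟩ | ⟨rfl, rfl, rfl, rfl⟩ | ⟨rfl, rfl, rfl, rfl⟩ |
      ⟨rfl, rfl, rfl, rfl⟩ | ⟨rfl, rfl, rfl, rfl⟩ | ⟨rfl, rfl, rfl, rfl⟩ |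
      ⟨rfl, rfl, rfl, rfl⟩ | ⟨rfl, rfl, rfl, rfl⟩ | ⟨rfl, rfl, rfl, rfl⟩ <;>
    simp [stdB_apply, sd₁, sd₂, sd₃]
  linarith

/-- For a trace-free tensor of anti-`Z` type, the equation `Z_{ijk} = 0` reads
`T_{jkl} = T_{ill}`. -/
lemma comp_eq_of_traceFree {T : Tri 4} (hZ : T ∈ AntiZ) (htr : T ∈ kerTrace 4)
    {i j k l : Fin 4} (h : DirectOrdering i j k l) :
    T (stdB j) (stdB k) (stdB l) = T (stdB i) (stdB l) (stdB l) := by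
  have hz := hZ.2 i j k l h
  have htri := htr (stdB i)
  have hii := hZ.1 (stdB i) (stdB i) (stdB i)
  rw [sum_of_directOrdering h] at htri
  simp only [Zc] at hz
  linarith

/-- With its last argument fixed, a torsion tensor is a 2-form with six components. The basis
2-forms are ordered and oriented so that each of the first three is paired with its Hodge dual
among the last three. -/
lemma torsion_expand {T : Tri 4} (hT : T ∈ Torsion 4) (X Y Z : V 4) : T X Y Z =
    (X 0 * Y 1 - X 1 * Y 0) * T (stdB 0) (stdB 1) Z
    + (X 0 * Y 2 - X 2 * Y 0) * T (stdB 0) (stdB 2) Z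
    + (X 0 * Y 3 - X 3 * Y 0) * T (stdB 0) (stdB 3) Z
    + (X 2 * Y 3 - X 3 * Y 2) * T (stdB 2) (stdB 3) Z
    + (X 3 * Y 1 - X 1 * Y 3) * T (stdB 3) (stdB 1) Z
    + (X 1 * Y 2 - X 2 * Y 1) * T (stdB 1) (stdB 2) Z := by
  have h (i j : Fin 4) := hT (stdB i) (stdB j) Z
  conv_lhs => rw [eq_sum_stdB X, eq_sum_stdB Y]
  simp only [map_add, map_smul, LinearMap.add_apply, LinearMap.smul_apply, smul_eq_mul]
  linear_combination X 0 * Y 0 * h 0 0 / 2 + X 1 * Y 1 * h 1 1 / 2 + X 2 * Y 2 * h 2 2 / 2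
    + X 3 * Y 3 * h 3 3 / 2 + X 1 * Y 0 * h 1 0 + X 2 * Y 0 * h 2 0 + X 3 * Y 0 * h 3 0
    + X 3 * Y 2 * h 3 2 + X 1 * Y 3 * h 1 3 + X 2 * Y 1 * h 2 1

/-- A trace-free tensor of anti-`Z` type is selfdual in its first two arguments. -/
lemma selfdual_expand {T : Tri 4} (hZ : T ∈ AntiZ) (htr : T ∈ kerTrace 4) (X Y Z : V 4) :
    T X Y Z = T (stdB 0) (stdB 1) Z * sd₁ X Y + T (stdB 0) (stdB 2) Z * sd₂ X Y
      + T (stdB 0) (stdB 3) Z * sd₃ X Y := by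
  have hd {i j k l : Fin 4} (h) := comp_eq_of_traceFree hZ htr ((directOrdering_iff i j k l).2 h)
  have ht (i j l : Fin 4) := hZ.1 (stdB i) (stdB j) (stdB l)
  have h1 : T (stdB 2) (stdB 3) Z = T (stdB 0) (stdB 1) Z := by
    rw [eq_sum_stdB Z]
    simp only [map_add, map_smul, smul_eq_mul]
    linear_combination - Z 0 * hd (i := 1) (j := 3) (k := 2) (l := 0) (by decide)
      + Z 0 * ht 2 3 0 - Z 0 * ht 0 1 0
      + Z 1 * hd (i := 0) (j := 2) (k := 3) (l := 1) (by decide)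
      + Z 2 * hd (i := 3) (j := 1) (k := 0) (l := 2) (by decide)
      + Z 2 * ht 2 3 2 - Z 2 * ht 0 1 2
      - Z 3 * hd (i := 2) (j := 0) (k := 1) (l := 3) (by decide)
  have h2 : T (stdB 3) (stdB 1) Z = T (stdB 0) (stdB 2) Z := by
    rw [eq_sum_stdB Z]
    simp only [map_add, map_smul, smul_eq_mul]
    linear_combination - Z 0 * hd (i := 2) (j := 1) (k := 3) (l := 0) (by decide)
      + Z 0 * ht 3 1 0 - Z 0 * ht 0 2 0
      + Z 2 * hd (i := 0) (j := 3) (k := 1) (l := 2) (by decide)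
      + Z 3 * hd (i := 1) (j := 2) (k := 0) (l := 3) (by decide)
      + Z 3 * ht 3 1 3 - Z 3 * ht 0 2 3
      - Z 1 * hd (i := 3) (j := 0) (k := 2) (l := 1) (by decide)
  have h3 : T (stdB 1) (stdB 2) Z = T (stdB 0) (stdB 3) Z := by
    rw [eq_sum_stdB Z]
    simp only [map_add, map_smul, smul_eq_mul]
    linear_combination - Z 0 * hd (i := 3) (j := 2) (k := 1) (l := 0) (by decide)
      + Z 0 * ht 1 2 0 - Z 0 * ht 0 3 0
      + Z 3 * hd (i := 0) (j := 1) (k := 2) (l := 3) (by decide)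
      + Z 1 * hd (i := 2) (j := 3) (k := 0) (l := 1) (by decide)
      + Z 1 * ht 1 2 1 - Z 1 * ht 0 3 1
      - Z 2 * hd (i := 1) (j := 0) (k := 3) (l := 2) (by decide)
  rw [torsion_expand hZ.1 X Y Z, h1, h2, h3, sd₁, sd₂, sd₃]
  ring

lemma mem_Aplus_of_traceFree {T : Tri 4} (hZ : T ∈ AntiZ) (htr : T ∈ kerTrace 4) :
    T ∈ Aplus := by
  have hsd := selfdual_expand hZ htr
  refine ⟨⟨⟨hZ.1, fun X Y Z => ?_⟩, htr⟩, fun Z => ⟨_, _, _, fun X Y => hsd X Y Z⟩⟩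
  -- By selfduality the Bianchi sum is the volume form contracted with the trace.
  have key : T X Y Z + T Y Z X + T Z X Y =
      ∑ i, vol4 (stdB i) X Y Z * ∑ j, T (stdB i) (stdB j) (stdB j) := by
    have hZ' (i j : Fin 4) (W : V 4) : T (stdB i) (stdB j) W =
        W 0 * T (stdB i) (stdB j) (stdB 0) + W 1 * T (stdB i) (stdB j) (stdB 1)
        + W 2 * T (stdB i) (stdB j) (stdB 2) + W 3 * T (stdB i) (stdB j) (stdB 3) := by
      conv_lhs => rw [eq_sum_stdB W]
      simp
    rw [hsd X Y Z, hsd Y Z X, hsd Z X Y]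
    -- Rewriting components with `hsd` leaves only those of the form `T₀ₘₙ` with `m ≠ 0`.
    have e0 := hsd (stdB 0) (stdB 0) (stdB 0)
    have e1 (j : Fin 4) := hsd (stdB 1) (stdB j) (stdB j)
    have e2 (j : Fin 4) := hsd (stdB 2) (stdB j) (stdB j)
    have e3 (j : Fin 4) := hsd (stdB 3) (stdB j) (stdB j)
    simp only [Fin.sum_univ_four, e0, e1, e2, e3]
    simp only [hZ' _ _ X, hZ' _ _ Y, hZ' _ _ Z, vol4_eq, sd₁, sd₂, sd₃]
    simp [stdB_apply]
    ring
  rw [key]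
  exact Finset.sum_eq_zero fun i _ => by rw [htr (stdB i), mul_zero]

/-- One third of the trace of `T`, as a linear functional. -/
def thirdTrace (T : Tri 4) : V 4 →ₗ[ℝ] ℝ where
  toFun X := (1 / 3) * ∑ j, T X (stdB j) (stdB j)
  map_add' X Y := by
    simp only [map_add, LinearMap.add_apply, Finset.sum_add_distrib, mul_add]
  map_smul' r X := by
    simp only [map_smul, LinearMap.smul_apply, smul_eq_mul, ← Finset.mul_sum, RingHom.id_apply]
    ring

/-- the space of torsion tensors on `ℝ⁴` of anti-`Z` type equals the
internal direct sum `C₋ ⊕ 𝒜₊`. -/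
theorem antiZ_eq_cminus_sup_aplus :
    AntiZ = Cminus ⊔ Aplus ∧ Cminus ⊓ Aplus = ⊥ := by
  refine ⟨le_antisymm (fun T hT => ?_) (sup_le Cminus_le_AntiZ Aplus_le_AntiZ), ?_⟩
  · have hC := cminusOf_mem (thirdTrace T)
    have hS : T - cminusOf (thirdTrace T) ∈ Aplus := by
      refine mem_Aplus_of_traceFree (AntiZ.sub_mem hT (Cminus_le_AntiZ hC)) fun X => ?_
      have h := trace_of_Cminus (T := cminusOf (thirdTrace T)) (fun _ _ _ => rfl) X
      simp only [LinearMap.sub_apply, Finset.sum_sub_distrib, h]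
      simp [thirdTrace]
    exact Submodule.mem_sup.2 ⟨_, hC, _, hS, add_sub_cancel _ _⟩
  · refine (Submodule.eq_bot_iff _).2 ?_
    rintro T ⟨⟨ν, hν⟩, ⟨⟨-, htr⟩, -⟩⟩
    have h0 : ν = 0 := LinearMap.ext fun X => by
      have h := trace_of_Cminus hν X
      rw [htr X] at h
      simpa using h.symm
    subst h0
    refine LinearMap.ext fun X => LinearMap.ext fun Y => LinearMap.ext fun Z => ?_
    rw [hν, vol4_eq]
    simp [sharp]
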